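/- arXiv:1710.00389 — 2 statements merged into one kernel-verified Lean document; each statement's English description precedes it below -/
import Mathlib

section
/- Let M be an N×m matrix over GF(2) that is a good syndrome pattern with witness w ∈ GF(2)^m, let sc_{j,a} := Σ_i a_i · M_{j,i} be its complete syndrome array, and let D : GF(2)^N → GF(2)^N be any columnwise decoder with D(0) = 0. Define the estimated complete syndrome bits by s̃_{j,a} := D(column a of sc)_j. Then for every block j the estimated complete syndrome row is valid, i.e., the map a ↦ s̃_{j,a} is additive: s̃_{j,a+b} = s̃_{j,a} + s̃_{j,b} for all a, b ∈ GF(2)^m. -/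
/-! A good pattern is a rank-one matrix `u wᵀ`, so every column `(w ⬝ᵥ a) • u` of its complete
syndrome array lies on the line through `u`. Over `ZMod 2` a decoder fixing `0` is homogeneous, and
a homogeneous map is linear on each line. -/

open Matrix

section RankOne

variable {ι κ R V : Type*}

theorem exists_eq_vecMulVec_of_forall_row_eq_zero_or_eq [MulZeroOneClass R]
    {M : Matrix ι κ R} {w : κ → R} (hM : ∀ j, M j = 0 ∨ M j = w) :
    ∃ u : ι → R, M = vecMulVec u w := by
  have row_eq_mul (j : ι) : ∃ c : R, ∀ i, M j i = c * w i := by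
    rcases hM j with h_zero | h_w
    · exact ⟨0, fun i ↦ by rw [h_zero, zero_mul, Pi.zero_apply]⟩
    · exact ⟨1, fun i ↦ by rw [h_w, one_mul]⟩
  choose u hu using row_eq_mul
  exact ⟨u, Matrix.ext hu⟩

theorem map_vecMulVec_mulVec_add_of_map_smul [Fintype κ] [CommSemiring R] [AddCommMonoid V]
    [Module R V] {f : (ι → R) → V} (hf : ∀ (c : R) (x : ι → R), f (c • x) = c • f x)
    (u : ι → R) (w a b : κ → R) :
    f (vecMulVec u w *ᵥ (a + b)) = f (vecMulVec u w *ᵥ a) + f (vecMulVec u w *ᵥ b) := by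
  have map_column (x : κ → R) : f (vecMulVec u w *ᵥ x) = (w ⬝ᵥ x) • f u := by
    rw [vecMulVec_mulVec, op_smul_eq_smul, hf]
  simp only [map_column, dotProduct_add, add_smul]

end RankOne

theorem map_zmod_two_smul_of_map_zero {A B : Type*} [Zero A] [Zero B]
    [MulActionWithZero (ZMod 2) A] [MulActionWithZero (ZMod 2) B]
    {f : A → B} (hf : f 0 = 0) (c : ZMod 2) (x : A) : f (c • x) = c • f x := by
  rcases eq_or_ne c 0 with rfl | hc
  · rw [zero_smul, zero_smul, hf]
  · obtain rfl : c = 1 := Fin.eq_one_of_ne_zero c hc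
    rw [one_smul, one_smul]

theorem good_pattern_estimated_syndrome_valid_general {ι κ V : Type*} [Fintype κ]
    [AddCommMonoid V] [Module (ZMod 2) V] {M : Matrix ι κ (ZMod 2)} {w : κ → ZMod 2}
    (hgood : ∀ j, M j = 0 ∨ M j = w) {D : (ι → ZMod 2) → V} (hD : D 0 = 0)
    (a b : κ → ZMod 2) :
    D (fun j ↦ ∑ i, (a + b) i * M j i) =
      D (fun j ↦ ∑ i, a i * M j i) + D (fun j ↦ ∑ i, b i * M j i) := by
  have column_eq_mulVec (x : κ → ZMod 2) : (fun j ↦ ∑ i, x i * M j i) = M *ᵥ x :=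
    vecMul_transpose M x
  obtain ⟨u, hu⟩ := exists_eq_vecMulVec_of_forall_row_eq_zero_or_eq hgood
  rw [column_eq_mulVec, column_eq_mulVec, column_eq_mulVec, hu]
  exact map_vecMulVec_mulVec_add_of_map_smul (map_zmod_two_smul_of_map_zero hD) u w a b

/-- **Lemma 4 of the paper.** Let `M` be a good syndrome pattern with
witness `w`, let `sc j a := ∑ i, a i * M j i` be its complete syndrome array, and let
`D : GF(2)^N → GF(2)^N` be any columnwise decoder with `D 0 = 0`. Define the estimated
complete syndrome bits `s̃ j a := (D (column a of sc)) j`. Then for every block `j`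
the estimated complete syndrome row `a ↦ s̃ j a` is additive (valid). -/
theorem good_pattern_estimated_syndrome_valid
    {N m : ℕ} (M : Matrix (Fin N) (Fin m) (ZMod 2)) (w : Fin m → ZMod 2)
    (hgood : ∀ j : Fin N, M j = 0 ∨ M j = w)
    (D : (Fin N → ZMod 2) → (Fin N → ZMod 2)) (hD : D 0 = 0) :
    ∀ (j : Fin N) (a b : Fin m → ZMod 2),
      D (fun j' : Fin N => ∑ i : Fin m, (a + b) i * M j' i) j =
        D (fun j' : Fin N => ∑ i : Fin m, a i * M j' i) j +
        D (fun j' : Fin N => ∑ i : Fin m, b i * M j' i) j := by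
  exact fun j a b ↦ congrFun (good_pattern_estimated_syndrome_valid_general hgood hD a b) j
end

section
/- Let D : GF(2)^N → GF(2)^N satisfy D(0) = 0, and let sc : {1,…,N} × GF(2)^m → GF(2) be any complete syndrome array, i.e., for each block j the map a ↦ sc_{j,a} is additive. Fix a block j₀ and define the estimated complete syndrome row s̃(a) := D(column a of sc)_{j₀}. If s̃ is additive (valid), then there exist w ∈ GF(2)^m and c ∈ GF(2)^N, where c is either the zero vector or equal to some column of sc, such that the good-pattern complete syndrome array scg_{j,a} := (Σ_i a_i w_i) · c_j satisfies D(column a of scg)_{j₀} = s̃(a) for every a ∈ GF(2)^m. In other words, one can always find a good syndrome pattern whose complete syndrome array generates exactly the same estimated complete syndromes for block j₀ under the same columnwise decoding. -/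
/-! Over `GF(2)` the condition `D 0 = 0` says that `D` is homogeneous, and additive maps are
linear. Over any division ring, if the estimated row `φ` is linear and nonzero, then `φ a₀ = 1` for
some `a₀`, and a homogeneous decoder recovers `φ` from column `a₀` alone: on `φ a • column a₀` it
returns `φ a * φ a₀ = φ a`. If `φ = 0`, any column will do. -/

theorem zmod_two_map_smul_of_map_zero {V W : Type*} [Zero V] [Zero W]
    [MulActionWithZero (ZMod 2) V] [MulActionWithZero (ZMod 2) W] {f : V → W} (hf : f 0 = 0)
    (t : ZMod 2) (v : V) : f (t • v) = t • f v := by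
  have zero_or_one : t = 0 ∨ t = 1 := by decide +revert
  rcases zero_or_one with rfl | rfl
  · rw [zero_smul, zero_smul, hf]
  · rw [one_smul, one_smul]

section DivisionRing

variable {K : Type*} [DivisionRing K]

theorem exists_forall_apply_mul_apply_eq_self {E : Type*} [AddCommMonoid E] [Module K E]
    (φ : E →ₗ[K] K) : ∃ a₀, ∀ a, φ a * φ a₀ = φ a := by
  rcases eq_or_ne φ 0 with rfl | hφ
  · exact ⟨0, fun a => mul_zero _⟩
  · obtain ⟨a₀, ha₀⟩ := LinearMap.surjective hφ 1
    exact ⟨a₀, fun a => by rw [ha₀, mul_one]⟩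

theorem valid_estimate_realized_by_good_pattern_general {J ι : Type*} [Fintype ι]
    (D : (J → K) → (J → K)) (sc : J → (ι → K) → K) (j₀ : J)
    (hD : ∀ (t : K) (v : J → K), D (t • v) j₀ = t * D v j₀)
    (hvalid : IsLinearMap K fun a => D (fun j => sc j a) j₀) :
    ∃ (w : ι → K) (a₀ : ι → K), ∀ a : ι → K,
      D (fun j => (∑ i, a i * w i) * sc j a₀) j₀ = D (fun j => sc j a) j₀ := by
  let φ : (ι → K) →ₗ[K] K := hvalid.mk' _
  obtain ⟨w, hw⟩ : ∃ w : ι → K, ∀ a, φ a = ∑ i, a i * w i := by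
    classical exact ⟨_, φ.pi_apply_eq_sum_univ⟩
  obtain ⟨a₀, ha₀⟩ := exists_forall_apply_mul_apply_eq_self φ
  refine ⟨w, a₀, fun a => ?_⟩
  calc
    D (fun j => (∑ i, a i * w i) * sc j a₀) j₀ = (∑ i, a i * w i) * φ a₀ := hD _ _
    _ = φ a * φ a₀ := by rw [hw a]
    _ = φ a := ha₀ a

end DivisionRing

/-- **constructive core of Lemma 5 of the paper.** Let `D` be a
columnwise decoder with `D 0 = 0`, and let `sc` be a complete syndrome array (each row
`a ↦ sc j a` is additive). Fix a block `j₀` and define the estimated complete syndrome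
row `s̃ a := (D (column a of sc)) j₀`. If `s̃` is additive (valid), then there exist
`w ∈ GF(2)^m` and `c ∈ GF(2)^N`, with `c` either the zero vector or a column of `sc`,
such that the good-pattern complete syndrome array `scg j a := (∑ i, a i * w i) * c j`
yields exactly the same estimates on block `j₀`: `(D (column a of scg)) j₀ = s̃ a`
for every `a`. -/
theorem valid_estimate_realized_by_good_pattern
    {N m : ℕ} (D : (Fin N → ZMod 2) → (Fin N → ZMod 2)) (hD : D 0 = 0)
    (sc : Fin N → (Fin m → ZMod 2) → ZMod 2)
    (hsc : ∀ (j : Fin N) (a b : Fin m → ZMod 2), sc j (a + b) = sc j a + sc j b)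
    (j₀ : Fin N)
    (hvalid : ∀ a b : Fin m → ZMod 2,
      D (fun j : Fin N => sc j (a + b)) j₀ =
        D (fun j : Fin N => sc j a) j₀ + D (fun j : Fin N => sc j b) j₀) :
    ∃ (w : Fin m → ZMod 2) (c : Fin N → ZMod 2),
      (c = 0 ∨ ∃ a : Fin m → ZMod 2, c = fun j : Fin N => sc j a) ∧
      ∀ a : Fin m → ZMod 2,
        D (fun j : Fin N => (∑ i : Fin m, a i * w i) * c j) j₀ =
          D (fun j : Fin N => sc j a) j₀ := by
  obtain ⟨w, a₀, h⟩ := valid_estimate_realized_by_good_pattern_general D sc j₀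
    (fun t v => congrFun (zmod_two_map_smul_of_map_zero hD t v) j₀)
    ((AddMonoidHom.mk' _ hvalid).toZModLinearMap 2).isLinear
  exact ⟨w, fun j => sc j a₀, Or.inr ⟨a₀, rfl⟩, h⟩
end
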